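/- arXiv:2211.05460 — 8 statements merged into one kernel-verified Lean document; each statement's English description precedes it below -/
import Mathlib

section
/- For every integer k ≥ 2, the following identity of formal power series in x with coefficients in ℤ[p,q] holds: (1 − (pq + pq²)·x + (p²q³ − p³q³)·x² + p^{k+2} q^{2k+1}·x^{k+1}) · Σ_{n≥1} ( Σ_{w ∈ F_{n,k}} p^{sper(w)} q^{area(w)} ) xⁿ = p²·( (q + pq²)·x − (pq³ − p²q³)·x² − p^{k} q^{2k}·x^{k} − p^{k+1} q^{2k+1}·x^{k+1} ). -/
open Finset

/-- Number of `1`s in a binary word. -/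
def wOnes (w : List Bool) : ℕ := w.count true

/-- Number of maximal runs (blocks) of consecutive `1`s in a binary word. -/
def wRuns (w : List Bool) : ℕ := w.count true - (w.zip w.tail).count (true, true)

/-- The set `F_{n,k}` of binary words of length `n` avoiding `k` consecutive `1`s. -/
def kbonWords (n k : ℕ) : Finset (Fin n → Bool) :=
  Finset.univ.filter (fun w => ¬ (List.replicate k true <:+: List.ofFn w))

/-- The polynomial ring `ℤ[p,q]`. -/
abbrev Rpq : Type := MvPolynomial (Fin 2) ℤ

noncomputable def pvar : Rpq := MvPolynomial.X 0
noncomputable def qvar : Rpq := MvPolynomial.X 1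

/-- Area of the `k`-bonacci polyomino of a word of length `n`. -/
def wArea (n : ℕ) (w : List Bool) : ℕ := n + wOnes w

/-- Semiperimeter of the `k`-bonacci polyomino of a word of length `n`. -/
def wSper (n : ℕ) (w : List Bool) : ℕ := n + 1 + wRuns w

theorem kb_zip_le (a : Bool) (w : List Bool) :
    ((a :: w).zip w).count (true, true) ≤ w.count true := by
  induction w generalizing a with
  | nil => simp
  | cons b w ih =>
    have := ih b
    rw [List.zip_cons_cons, List.count_cons, List.count_cons]
    cases a <;> cases b <;> simp at * <;> omega

theorem kb_runs_false (w : List Bool) : wRuns (false :: w) = wRuns w := by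
  cases w with
  | nil => simp [wRuns]
  | cons b w => simp [wRuns, List.count_cons]

theorem kb_runs_tf (w : List Bool) : wRuns (true :: false :: w) = wRuns w + 1 := by
  have h : (w.zip w.tail).count (true, true) ≤ w.count true := by
    cases w with
    | nil => simp
    | cons b w =>
      have := kb_zip_le b w
      rw [List.count_cons, List.tail_cons]
      omega
  have h2 : ((false :: w).zip w).count (true, true) = (w.zip w.tail).count (true, true) := by
    cases w with
    | nil => simp
    | cons b w => simp [List.count_cons]
  unfold wRuns
  simp only [List.tail_cons, List.zip_cons_cons, List.count_cons, h2]
  simp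
  omega

theorem kb_runs_tt (w : List Bool) : wRuns (true :: true :: w) = wRuns (true :: w) := by
  have h := kb_zip_le true w
  unfold wRuns at *
  simp only [List.tail_cons, List.zip_cons_cons, List.count_cons] at *
  simp at *

theorem kb_runs_rep (j : ℕ) (w : List Bool) :
    wRuns (List.replicate j true ++ false :: w) = (if j = 0 then 0 else 1) + wRuns w := by
  induction j with
  | zero => simp [kb_runs_false]
  | succ j ih =>
    cases j with
    | zero => simp [kb_runs_tf, add_comm]
    | succ j =>
      rw [List.replicate_succ, List.replicate_succ, List.cons_append, List.cons_append,
        kb_runs_tt, ← List.cons_append, ← List.replicate_succ, ih]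
      simp

theorem kb_runs_repn (j : ℕ) :
    wRuns (List.replicate j true) = (if j = 0 then 0 else 1) := by
  induction j with
  | zero => simp [wRuns]
  | succ j ih =>
    cases j with
    | zero => simp [wRuns]
    | succ j =>
      rw [List.replicate_succ, List.replicate_succ, 
        kb_runs_tt, ← List.replicate_succ, ih]
      simp

theorem kb_prefix (j k : ℕ) (h : j < k) (w : List Bool) :
    ¬ (List.replicate k true <+: List.replicate j true ++ false :: w) := by
  induction j generalizing k with
  | zero =>
    obtain ⟨k, rfl⟩ := Nat.exists_eq_succ_of_ne_zero (by omega : k ≠ 0)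
    simp [List.replicate_succ, List.cons_prefix_cons]
  | succ j ih =>
    obtain ⟨k, rfl⟩ := Nat.exists_eq_succ_of_ne_zero (by omega : k ≠ 0)
    have := ih k (by omega)
    simpa [List.replicate_succ, List.cons_prefix_cons] using this

theorem kb_infix (j k : ℕ) (h : j < k) (w : List Bool) :
    (List.replicate k true <:+: List.replicate j true ++ false :: w) ↔
      List.replicate k true <:+: w := by
  induction j with
  | zero =>
    have := kb_prefix 0 k h w
    simp only [List.replicate_zero, List.nil_append] at *
    rw [List.infix_cons_iff]
    tauto
  | succ j ih =>
    have h1 := kb_prefix (j+1) k h w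
    have h2 := ih (by omega)
    rw [List.replicate_succ, List.cons_append] at *
    rw [List.infix_cons_iff]
    tauto

noncomputable def kbWt (k j : ℕ) (w : List Bool) : Rpq :=
  if List.replicate k true <:+: List.replicate j true ++ w then 0 else
    pvar ^ (w.length + wRuns (List.replicate j true ++ w)) * qvar ^ (w.length + w.count true)

noncomputable def kbU (k j n : ℕ) : Rpq := ∑ w : Fin n → Bool, kbWt k j (List.ofFn w)

noncomputable def kbE (j : ℕ) : Rpq := if j = 0 then 1 else pvar

theorem kbWt_false (k j : ℕ) (h : j < k) (w : List Bool) :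
    kbWt k j (false :: w) = pvar * qvar * kbE j * kbWt k 0 w := by
  unfold kbWt kbE
  simp only [kb_infix j k h, kb_runs_rep, List.replicate_zero, List.nil_append]
  by_cases hj : j = 0
  · split_ifs
    · simp
    · simp [hj]; ring
  · split_ifs
    · simp
    · simp; ring

theorem kbWt_true (k j : ℕ) (w : List Bool) :
    kbWt k j (true :: w) = pvar * qvar ^ 2 * kbWt k (j + 1) w := by
  unfold kbWt
  have : List.replicate j true ++ true :: w = List.replicate (j+1) true ++ w := by
    rw [List.replicate_succ', List.append_assoc]; rfl
  rw [this]
  split_ifs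
  · simp
  · simp; ring

theorem kbU_succ (k j n : ℕ) (h : j < k) :
    kbU k j (n + 1) = pvar * qvar * kbE j * kbU k 0 n + pvar * qvar ^ 2 * kbU k (j + 1) n := by
  unfold kbU
  rw [← (Fin.consEquiv (fun _ : Fin (n+1) => Bool)).sum_comp, Fintype.sum_prod_type]
  rw [Fintype.sum_bool, Finset.mul_sum, Finset.mul_sum, add_comm]
  congr 1
  · refine Finset.sum_congr rfl fun w _ => ?_
    rw [← kbWt_false k j h]
    simp [Fin.consEquiv, List.ofFn_succ]
  · refine Finset.sum_congr rfl fun w _ => ?_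
    rw [← kbWt_true k j]
    simp [Fin.consEquiv, List.ofFn_succ]

theorem kbU_zero (k j : ℕ) (h : j < k) : kbU k j 0 = kbE j := by
  have : ¬ (List.replicate k true <:+: List.replicate j true) := by
    intro h'
    have := h'.length_le
    simp at this
    omega
  simp only [kbU, kbWt, kbE, List.ofFn_zero, List.append_nil, this, kb_runs_repn]
  by_cases hj : j = 0 <;> simp [hj]

theorem kbU_top (k n : ℕ) : kbU k k n = 0 := by
  unfold kbU kbWt
  refine Finset.sum_eq_zero fun w _ => ?_
  rw [if_pos (List.prefix_append _ _).isInfix]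

noncomputable def kbS (k j : ℕ) : PowerSeries Rpq := PowerSeries.mk (kbU k j)

theorem kbS_rec (k j : ℕ) (h : j < k) :
    kbS k j = PowerSeries.C (kbE j) *
        (1 + PowerSeries.C (pvar * qvar) * PowerSeries.X * kbS k 0)
      + PowerSeries.C (pvar * qvar ^ 2) * PowerSeries.X * kbS k (j + 1) := by
  ext1 n
  cases n with
  | zero =>
    simp [kbS, mul_assoc, kbU_zero k j h]
  | succ n =>
    simp only [mul_add, mul_assoc, map_add, PowerSeries.coeff_C_mul,
      PowerSeries.coeff_succ_X_mul, kbS, PowerSeries.coeff_mk, kbU_succ k j n h,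
      PowerSeries.coeff_one]
    simp
    ring

theorem kbS_top (k : ℕ) : kbS k k = 0 := by
  ext1 n
  simp [kbS, kbU_top]

theorem kbS_tel (k i : ℕ) (h : i + 1 ≤ k) :
    (1 - PowerSeries.C (pvar * qvar ^ 2) * PowerSeries.X) * kbS k (k - i) =
     PowerSeries.C pvar * (1 + PowerSeries.C (pvar * qvar) * PowerSeries.X * kbS k 0) *
      (1 - (PowerSeries.C (pvar * qvar ^ 2) * PowerSeries.X) ^ i) := by
  induction i with
  | zero => simp [kbS_top]
  | succ i ih =>
    have h1 := ih (by omega)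
    have h2 := kbS_rec k (k - (i+1)) (by omega)
    rw [show k - (i+1) + 1 = k - i by omega, kbE, if_neg (by omega)] at h2
    clear ih
    rw [pow_succ _ i]
    generalize PowerSeries.C (pvar * qvar ^ 2) * PowerSeries.X = c at *
    generalize PowerSeries.C (pvar * qvar) * PowerSeries.X = a at *
    linear_combination (1 - c) * h2 + c * h1

theorem kb_main (k : ℕ) (hk : 2 ≤ k) :
    PowerSeries.mk (fun n =>
          if n = 0 then 0 else
            ∑ w ∈ kbonWords n k,
              pvar ^ wSper n (List.ofFn w) * qvar ^ wArea n (List.ofFn w))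
    = PowerSeries.C pvar * (kbS k 0 - 1) := by
  ext1 n
  rw [PowerSeries.coeff_C_mul, map_sub, PowerSeries.coeff_one, kbS, PowerSeries.coeff_mk,
    PowerSeries.coeff_mk]
  by_cases hn : n = 0
  · subst hn
    simp [kbU_zero k 0 (by omega), kbE]
  · rw [if_neg hn, if_neg hn, sub_zero, kbU, Finset.mul_sum, kbonWords, Finset.sum_filter]
    refine Finset.sum_congr rfl fun w _ => ?_
    simp only [kbWt, List.replicate_zero, List.nil_append, wSper, wArea, wOnes, List.length_ofFn]
    split_ifs
    · simp
    · ring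

theorem kbonacci_polyomino_gf (k : ℕ) (hk : 2 ≤ k) :
    (1 - PowerSeries.C (R := Rpq) (pvar * qvar + pvar * qvar ^ 2) * PowerSeries.X
        + PowerSeries.C (R := Rpq) (pvar ^ 2 * qvar ^ 3 - pvar ^ 3 * qvar ^ 3) * PowerSeries.X ^ 2
        + PowerSeries.C (R := Rpq) (pvar ^ (k + 2) * qvar ^ (2 * k + 1)) * PowerSeries.X ^ (k + 1))
      * PowerSeries.mk (fun n =>
          if n = 0 then 0 else
            ∑ w ∈ kbonWords n k,
              pvar ^ wSper n (List.ofFn w) * qvar ^ wArea n (List.ofFn w))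
    = PowerSeries.C (R := Rpq) (pvar ^ 2)
        * (PowerSeries.C (R := Rpq) (qvar + pvar * qvar ^ 2) * PowerSeries.X
          - PowerSeries.C (R := Rpq) (pvar * qvar ^ 3 - pvar ^ 2 * qvar ^ 3) * PowerSeries.X ^ 2
          - PowerSeries.C (R := Rpq) (pvar ^ k * qvar ^ (2 * k)) * PowerSeries.X ^ k
          - PowerSeries.C (R := Rpq) (pvar ^ (k + 1) * qvar ^ (2 * k + 1)) * PowerSeries.X ^ (k + 1)) := by
  rw [kb_main k hk]
  have h0 := kbS_rec k 0 (by omega)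
  have h1 := kbS_tel k (k - 1) (by omega)
  rw [show k - (k - 1) = 1 by omega] at h1
  obtain ⟨m, rfl⟩ : ∃ m, k = m + 1 := ⟨k - 1, by omega⟩
  simp only [kbE, if_true, map_one, Nat.add_sub_cancel, zero_add] at h0 h1
  simp only [map_mul, map_add, map_sub, map_pow] at h0 h1 ⊢
  generalize kbS (m+1) 0 = S at *
  generalize kbS (m+1) 1 = T at *
  generalize (PowerSeries.C pvar : PowerSeries Rpq) = p at *
  generalize (PowerSeries.C qvar : PowerSeries Rpq) = q at *
  generalize (PowerSeries.X : PowerSeries Rpq) = x at *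
  linear_combination p * (1 - p * q ^ 2 * x) * h0 + p * (p * q ^ 2 * x) * h1
end

section
/- For every integer k ≥ 2, the following identity of formal power series in x over ℤ holds: (1 − 2x + x^{k+1})² · Σ_{n≥1} ( Σ_{w ∈ F_{n,k}} area(w) ) xⁿ = 3x − 2k·x^{k} − 2(2 − k)·x^{k+1} + x^{2k+1}. In other words, the generating function for the total area of all k-bonacci polyominoes with n columns is A_k(x) = (3x − 2k x^k − 2(2−k) x^{k+1} + x^{2k+1})/(1 − 2x + x^{k+1})². -/
open Finset

def bL : ℕ → (List Bool → ℤ) → ℤ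
  | 0, h => h []
  | n + 1, h => bL n (fun l => h (false :: l)) + bL n (fun l => h (true :: l))

lemma bL_eq (n : ℕ) (h : List Bool → ℤ) : ∑ w : Fin n → Bool, h (List.ofFn w) = bL n h := by
  induction n generalizing h with
  | zero => simp [bL]
  | succ n ih =>
    rw [← (Fin.consEquiv (fun _ : Fin (n+1) => Bool)).sum_comp, Fintype.sum_prod_type]
    simp only [Fin.consEquiv, Equiv.coe_fn_mk, List.ofFn_succ, Fin.cons_zero, Fin.cons_succ, bL,
      ← ih, Fintype.sum_bool]
    rw [add_comm]

lemma bL_add (n : ℕ) (f g : List Bool → ℤ) : bL n (fun l => f l + g l) = bL n f + bL n g := by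
  simp only [← bL_eq, Finset.sum_add_distrib]

lemma bL_sub (n : ℕ) (f g : List Bool → ℤ) : bL n (fun l => f l - g l) = bL n f - bL n g := by
  simp only [← bL_eq, Finset.sum_sub_distrib]

lemma bL_mul (n : ℕ) (c : ℤ) (g : List Bool → ℤ) : bL n (fun l => c * g l) = c * bL n g := by
  simp only [← bL_eq, Finset.mul_sum]

lemma bL_zero (n : ℕ) : bL n (fun _ => 0) = 0 := by
  simp only [← bL_eq, Finset.sum_const_zero]

def bG (k : ℕ) (f : List Bool → ℤ) (l : List Bool) : ℤ :=
  if List.replicate k true <:+: l then 0 else f l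

lemma bL_prefix (j n : ℕ) (h : List Bool → ℤ) :
    bL n (fun w => if List.replicate j true <+: w then h w else 0)
      = if j ≤ n then bL (n - j) (fun v => h (List.replicate j true ++ v)) else 0 := by
  induction j generalizing n h with
  | zero => simp
  | succ j ih =>
    cases n with
    | zero => simp [bL, List.replicate_succ]
    | succ n =>
      simp only [bL, List.replicate_succ, List.cons_prefix_cons, true_and]
      simp only [Bool.true_eq_false, false_and, if_false, bL_zero, zero_add]
      rw [ih n (fun w => h (true :: w))]
      simp

lemma not_prefix (k j : ℕ) (u : List Bool) (h : j < k) :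
    ¬ List.replicate k true <+: List.replicate j true ++ false :: u := by
  induction j generalizing k with
  | zero =>
    obtain ⟨k, rfl⟩ : ∃ m, k = m + 1 := ⟨k - 1, by omega⟩
    simp [List.replicate_succ]
  | succ j ih =>
    obtain ⟨k, rfl⟩ : ∃ m, k = m + 1 := ⟨k - 1, by omega⟩
    simpa [List.replicate_succ] using ih k (by omega)

lemma infix_iff (k j : ℕ) (u : List Bool) (h : j < k) :
    List.replicate k true <:+: List.replicate j true ++ false :: u ↔
      List.replicate k true <:+: u := by
  induction j with
  | zero =>
    have := not_prefix k 0 u h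
    simp only [List.replicate_zero, List.nil_append] at this ⊢
    rw [List.infix_cons_iff]; tauto
  | succ j ih =>
    have := not_prefix k (j+1) u h
    rw [← ih (by omega)]
    rw [List.replicate_succ (n := j), List.cons_append] at this ⊢
    rw [List.infix_cons_iff]; tauto

lemma rec_main (k : ℕ) (n : ℕ) (f : List Bool → ℤ) :
    bL (n+1) (bG (k+1) f) = bL n (bG (k+1) (fun l => f (false :: l)))
      + bL n (bG (k+1) (fun l => f (true :: l)))
      - (if k + 1 ≤ n then
          bL (n - (k+1)) (bG (k+1) (fun l => f (List.replicate (k+1) true ++ false :: l))) else 0)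
      - (if n = k then f (List.replicate (k+1) true) else 0) := by
  have e1 : ∀ l, bG (k+1) f (false :: l) = bG (k+1) (fun l => f (false :: l)) l := by
    intro l
    have := infix_iff (k+1) 0 l (by omega)
    simp only [List.replicate_zero, List.nil_append] at this
    simp only [bG, this]
  have e2 : ∀ l, bG (k+1) f (true :: l) = bG (k+1) (fun l => f (true :: l)) l
      - (if List.replicate k true <+: l then bG (k+1) (fun l => f (true :: l)) l else 0) := by
    intro l
    have : List.replicate (k+1) true <:+: true :: l ↔
      (List.replicate k true <+: l ∨ List.replicate (k+1) true <:+: l) := by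
      rw [List.infix_cons_iff]
      simp [List.replicate_succ]
    simp only [bG, this]
    split_ifs <;> simp_all
  rw [bL]
  simp only [e1, e2]
  rw [bL_sub, bL_prefix]
  have key : (if k ≤ n then bL (n - k) (fun v => bG (k+1) (fun l => f (true :: l))
        (List.replicate k true ++ v)) else 0) =
      (if k + 1 ≤ n then
          bL (n - (k+1)) (bG (k+1) (fun l => f (List.replicate (k+1) true ++ false :: l))) else 0)
      + (if n = k then f (List.replicate (k+1) true) else 0) := by
    rcases lt_trichotomy n k with h | h | h
    · rw [if_neg (by omega), if_neg (by omega), if_neg (by omega)]; rfl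
    · subst h
      have : ¬ List.replicate (n+1) true <:+: List.replicate n true := by
        intro h; have := h.length_le; simp at this
      rw [List.replicate_succ] at this
      simp [bL, bG, this, List.replicate_succ (n := n)]
    · obtain ⟨m, rfl⟩ : ∃ m, n = k + 1 + m := ⟨n - (k+1), by omega⟩
      rw [if_pos (by omega), if_pos (by omega), if_neg (by omega)]
      rw [show k + 1 + m - k = m + 1 by omega, show k + 1 + m - (k+1) = m by omega, bL]
      have t : ∀ l, bG (k+1) (fun l => f (true :: l)) (List.replicate k true ++ true :: l) = 0 := by
        intro l
        rw [bG, if_pos]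
        refine ⟨[], l, ?_⟩
        rw [List.replicate_succ']
        simp
      have t2 : ∀ l, bG (k+1) (fun l => f (true :: l)) (List.replicate k true ++ false :: l)
          = bG (k+1) (fun l => f (List.replicate (k+1) true ++ false :: l)) l := by
        intro l
        simp only [bG, infix_iff (k+1) k l (by omega)]
        simp [List.replicate_succ]
      simp only [t, t2, bL_zero, add_zero]
  rw [key]; ring

def bc (k n : ℕ) : ℤ := bL n (bG k (fun _ => 1))
def ba (k n : ℕ) : ℤ := bL n (bG k (fun l => (l.length : ℤ) + l.count true))

lemma bG_shift (k n : ℕ) (c : ℤ) (f : List Bool → ℤ)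
    (h : ∀ l, f l = (l.length : ℤ) + l.count true + c) :
    bL n (bG k f) = ba k n + c * bc k n := by
  rw [ba, bc, ← bL_mul, ← bL_add]
  congr 1
  funext l
  simp only [bG, h]
  split_ifs <;> simp

lemma bc_rec (k n : ℕ) : bc (k+1) (n+1) = 2 * bc (k+1) n
    - (if k + 1 ≤ n then bc (k+1) (n-(k+1)) else 0) - (if n = k then 1 else 0) := by
  rw [bc, rec_main]; simp only [bc]; ring

lemma ba_rec (k n : ℕ) : ba (k+1) (n+1) = 2 * ba (k+1) n + 3 * bc (k+1) n
    - (if k + 1 ≤ n then ba (k+1) (n-(k+1)) + (2*(k+1)+1) * bc (k+1) (n-(k+1)) else 0)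
    - (if n = k then 2 * ((k:ℤ)+1) else 0) := by
  conv_lhs => rw [ba, rec_main]
  rw [bG_shift _ _ 1 _ (by intro l; simp; ring), bG_shift _ _ 2 _ (by intro l; simp; ring),
    bG_shift _ _ (2*(k+1)+1) _ (by intro l; simp; ring)]
  have : ((List.replicate (k+1) true).length : ℤ) + (List.replicate (k+1) true).count true
    = 2 * ((k:ℤ)+1) := by simp; ring
  rw [this]
  ring

open PowerSeries in
lemma gf_c (k : ℕ) : (1 - 2 * X + X ^ (k + 1 + 1)) * PowerSeries.mk (bc (k+1)) = (1 - X ^ (k+1) : ℤ⟦X⟧) := by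
  have : (1 - 2 * X + X ^ (k + 1 + 1)) * PowerSeries.mk (bc (k+1))
    = PowerSeries.mk (bc (k+1)) - C (2:ℤ) * (X * PowerSeries.mk (bc (k+1))) + X ^ (k+1+1) * PowerSeries.mk (bc (k+1)) := by
    rw [show (C (2:ℤ) : ℤ⟦X⟧) = 2 from rfl]; ring
  rw [this]
  ext n
  cases n with
  | zero => simp [coeff_X_pow_mul', coeff_X_pow, bc, bL, bG]
  | succ n =>
    simp only [map_add, map_sub, coeff_C_mul, coeff_succ_X_mul, coeff_mk, coeff_X_pow_mul',
      coeff_X_pow, coeff_one, bc_rec, Nat.add_sub_add_right, Nat.add_le_add_iff_right,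
      Nat.add_right_cancel_iff]
    simp
    ring

open PowerSeries in
lemma gf_a (k : ℕ) : (1 - 2 * X + X ^ (k + 1 + 1)) * PowerSeries.mk (ba (k+1)) =
    ((3 * X - C (2*((k:ℤ)+1)+1) * X ^ (k+1+1)) * PowerSeries.mk (bc (k+1))
      - C (2*((k:ℤ)+1)) * X ^ (k+1) : ℤ⟦X⟧) := by
  have : (1 - 2 * X + X ^ (k + 1 + 1)) * PowerSeries.mk (ba (k+1))
    = PowerSeries.mk (ba (k+1)) - C (2:ℤ) * (X * PowerSeries.mk (ba (k+1))) + X ^ (k+1+1) * PowerSeries.mk (ba (k+1)) := by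
    rw [show (C (2:ℤ) : ℤ⟦X⟧) = 2 from rfl]; ring
  rw [this]
  have : (3 * X - C (2*((k:ℤ)+1)+1) * X ^ (k+1+1)) * PowerSeries.mk (bc (k+1))
    = C (3:ℤ) * (X * PowerSeries.mk (bc (k+1))) - C (2*((k:ℤ)+1)+1) * (X ^ (k+1+1) * PowerSeries.mk (bc (k+1))) := by
    rw [show (C (3:ℤ) : ℤ⟦X⟧) = 3 from rfl]; ring
  rw [this]
  obtain ⟨c, hc⟩ : ∃ c : ℤ, c = 2*((k:ℤ)+1)+1 := ⟨_, rfl⟩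
  rw [← hc]
  ext n
  cases n with
  | zero => simp [coeff_X_pow_mul', coeff_X_pow, ba, bL, bG]
  | succ n =>
    simp only [map_add, map_sub, coeff_C_mul, coeff_succ_X_mul, coeff_mk, coeff_X_pow_mul',
      coeff_X_pow, ba_rec, Nat.add_sub_add_right, Nat.add_le_add_iff_right,
      Nat.add_right_cancel_iff]
    rw [hc]
    split_ifs <;> ring

lemma sum_eq (k n : ℕ) :
    (if n = 0 then 0 else ∑ w ∈ kbonWords n k, (wArea n (List.ofFn w) : ℤ)) 
      = if n = 0 then 0 else ba k n := by
  split_ifs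
  · rfl
  · rw [ba, ← bL_eq, kbonWords, Finset.sum_filter]
    refine Finset.sum_congr rfl fun w _ => ?_
    simp only [bG, wArea, wOnes, List.length_ofFn]
    split_ifs <;> simp_all

theorem total_area_gf (k : ℕ) (hk : 2 ≤ k) :
    (1 - 2 * PowerSeries.X + PowerSeries.X ^ (k + 1)) ^ 2
      * PowerSeries.mk (fun n =>
          if n = 0 then 0 else ∑ w ∈ kbonWords n k, (wArea n (List.ofFn w) : ℤ))
    = PowerSeries.C (R := ℤ) 3 * PowerSeries.X
        - PowerSeries.C (R := ℤ) (2 * k) * PowerSeries.X ^ k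
        - PowerSeries.C (R := ℤ) (2 * (2 - (k : ℤ))) * PowerSeries.X ^ (k + 1)
        + PowerSeries.X ^ (2 * k + 1) := by
  obtain ⟨k, rfl⟩ : ∃ m, k = m + 1 := ⟨k - 1, by omega⟩
  have e : (fun n => if n = 0 then 0 else
      ∑ w ∈ kbonWords n (k+1), (wArea n (List.ofFn w) : ℤ)) = ba (k+1) := by
    funext n
    rw [sum_eq]
    split_ifs with h
    · subst h; simp [ba, bL, bG]
    · rfl
  rw [e]
  have h1 := gf_c k
  have h2 := gf_a k
  have c3 : PowerSeries.C (3:ℤ) = 3 := rfl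
  have ck : PowerSeries.C (k:ℤ) = (k : PowerSeries ℤ) := by simp
  have c2 : PowerSeries.C (2:ℤ) = 2 := rfl
  push_cast
  simp only [map_mul, map_add, map_sub, map_one, c3, c2, ck] at h2 ⊢
  linear_combination (1 - 2 * PowerSeries.X + PowerSeries.X ^ (k + 1 + 1)) * h2 + (3 * PowerSeries.X - (2*((k:PowerSeries ℤ)+1)+1) * PowerSeries.X ^ (k+1+1)) * h1
end

section
/- For every integer k ≥ 2, the following identity of formal power series in x over ℤ holds: (1 − 2x + x^{k+1})² · Σ_{n≥1} ( Σ_{w ∈ F_{n,k}} sper(w) ) xⁿ = 5x − 5x² − (2 + k)·x^{k} − (1 − k)·x^{k+1} + 4x^{k+2} − x^{2k+2}. In other words, the generating function for the total semiperimeter of all k-bonacci polyominoes with n columns is P_k(x) = (5x − 5x² − (2+k)x^k − (1−k)x^{k+1} + 4x^{k+2} − x^{2k+2})/(1 − 2x + x^{k+1})². -/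
open Finset

/-- Automaton accepting words whose first run of ones has length at most `m`, others at most `K`. -/
def okW (K : ℕ) : ℕ → List Bool → Bool
  | _, [] => true
  | _, false :: w => okW K K w
  | 0, true :: _ => false
  | m + 1, true :: w => okW K m w

/-- Runs of ones started in the word, given the previous letter. -/
def runsW : Bool → List Bool → ℕ
  | _, [] => 0
  | p, a :: w => (if a = true ∧ p = false then 1 else 0) + runsW a w

lemma okW_iff (K : ℕ) (w : List Bool) : ∀ m, m ≤ K →
    (okW K m w = true ↔ ¬ (List.replicate (K+1) true <:+: w)
      ∧ ¬ (List.replicate (m+1) true <+: w)) := by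
  induction w with
  | nil => intro m _; simp [okW, List.replicate_succ]
  | cons a w ih =>
    intro m hm
    cases a with
    | false =>
      rw [okW, ih K le_rfl, List.infix_cons_iff]
      simp only [List.replicate_succ, List.cons_prefix_cons]
      simp only [← List.replicate_succ]
      constructor
      · rintro ⟨h1, h2⟩; simp [h1]
      · rintro ⟨h1, h2⟩
        have h3 : ¬ (List.replicate (K+1) true <:+: w) := fun h => h1 (Or.inr h)
        exact ⟨h3, fun h => h3 h.isInfix⟩
    | true =>
      cases m with
      | zero => simp [okW, List.replicate_succ, List.cons_prefix_cons]
      | succ m =>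
        rw [okW, ih m (by omega), List.infix_cons_iff]
        have e1 : ∀ j, (List.replicate (j+1) true <+: true :: w) ↔
            (List.replicate j true <+: w) := by
          intro j; simp [List.replicate_succ, List.cons_prefix_cons]
        rw [e1, e1]
        have h4 : List.replicate K true <+: w → List.replicate (m+1) true <+: w := by
          intro h
          refine List.IsPrefix.trans ?_ h
          obtain ⟨d, rfl⟩ := Nat.exists_eq_add_of_le hm
          rw [List.replicate_add (m+1) d]
          exact List.prefix_append _ _
        tauto

lemma okW_iff' (K : ℕ) (w : List Bool) :
    (okW K K w = true ↔ ¬ (List.replicate (K+1) true <:+: w)) := by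
  rw [okW_iff K w K le_rfl]
  constructor
  · exact fun h => h.1
  · exact fun h => ⟨h, fun h' => h h'.isInfix⟩

lemma count_runsW (w : List Bool) : ∀ p, w.count true
    = runsW p w + ((p :: w).zip w).count (true, true) := by
  induction w with
  | nil => intro p; simp [runsW]
  | cons a t ih =>
    intro p
    have := ih a
    rw [List.zip_cons_cons, List.count_cons, List.count_cons, runsW, this]
    cases a <;> cases p <;> simp <;> omega

lemma wRuns_eq (w : List Bool) : wRuns w = runsW false w := by
  have h := count_runsW w false
  have : ((false :: w).zip w).count (true, true) = (w.zip w.tail).count (true, true) := by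
    cases w with
    | nil => simp
    | cons a t => simp
  rw [wRuns, h, this]; omega

/-- Number of accepted words. -/
def cnt (K m n : ℕ) : ℤ := ∑ w : Fin n → Bool, if okW K m (List.ofFn w) = true then 1 else 0
/-- Total number of runs over accepted words. -/
def tot (K : ℕ) (p : Bool) (m n : ℕ) : ℤ :=
  ∑ w : Fin n → Bool, if okW K m (List.ofFn w) = true then (runsW p (List.ofFn w) : ℤ) else 0

lemma sum_words_succ (n : ℕ) (f : List Bool → ℤ) :
    ∑ w : Fin (n+1) → Bool, f (List.ofFn w)
      = ∑ w : Fin n → Bool, f (true :: List.ofFn w)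
        + ∑ w : Fin n → Bool, f (false :: List.ofFn w) := by
  rw [← (Fin.consEquiv (fun _ : Fin (n+1) => Bool)).sum_comp, Fintype.sum_prod_type]
  simp [Fin.consEquiv, List.ofFn_succ]

lemma cnt_zero (K m : ℕ) : cnt K m 0 = 1 := by simp [cnt, okW]
lemma tot_zero (K m : ℕ) (p : Bool) : tot K p m 0 = 0 := by simp [tot, runsW]
lemma cnt_succ_zero (K n : ℕ) : cnt K 0 (n+1) = cnt K K n := by
  rw [cnt, sum_words_succ n (fun l => if okW K 0 l = true then (1 : ℤ) else 0)]
  simp [okW, cnt, -Finset.sum_boole]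
  rfl
lemma cnt_succ_succ (K m n : ℕ) : cnt K (m+1) (n+1) = cnt K m n + cnt K K n := by
  rw [cnt, sum_words_succ n (fun l => if okW K (m+1) l = true then (1 : ℤ) else 0)]
  simp [okW, cnt, -Finset.sum_boole]
  rfl
lemma tot_succ_zero (K n : ℕ) (p : Bool) : tot K p 0 (n+1) = tot K false K n := by
  rw [tot, sum_words_succ n (fun l => if okW K 0 l = true then (runsW p l : ℤ) else 0)]
  simp [okW, tot, runsW]
lemma tot_true_succ (K m n : ℕ) :
    tot K true (m+1) (n+1) = tot K true m n + tot K false K n := by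
  rw [tot, sum_words_succ n (fun l => if okW K (m+1) l = true then (runsW true l : ℤ) else 0)]
  simp [okW, tot, runsW]
lemma tot_false_succ (K m n : ℕ) :
    tot K false (m+1) (n+1) = cnt K m n + tot K true m n + tot K false K n := by
  rw [tot, sum_words_succ n (fun l => if okW K (m+1) l = true then (runsW false l : ℤ) else 0)]
  simp only [okW, tot, runsW, cnt, ← Finset.sum_add_distrib]
  refine Finset.sum_congr rfl fun w _ => ?_
  split_ifs <;> simp_all

open PowerSeries in
lemma cnt_ps (K m : ℕ) : (1 - X) * PowerSeries.mk (cnt K m)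
    = (1 - X ^ (m+1)) * (1 + X * PowerSeries.mk (cnt K K)) := by
  induction m with
  | zero =>
    have : PowerSeries.mk (cnt K 0) = 1 + X * PowerSeries.mk (cnt K K) := by
      ext n
      cases n with
      | zero => simp [cnt_zero]
      | succ n => simp [cnt_succ_zero, coeff_succ_X_mul, coeff_one]
    rw [this]; ring
  | succ m ih =>
    have : PowerSeries.mk (cnt K (m+1))
        = 1 + X * PowerSeries.mk (cnt K m) + X * PowerSeries.mk (cnt K K) := by
      ext n
      cases n with
      | zero => simp [cnt_zero]
      | succ n => simp [cnt_succ_succ, coeff_succ_X_mul, coeff_one]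
    rw [this]; linear_combination X * ih

open PowerSeries in
lemma tot_ps (K m : ℕ) : (1 - X) * PowerSeries.mk (tot K true m)
    = (X - X ^ (m+2)) * PowerSeries.mk (tot K false K) := by
  induction m with
  | zero =>
    have : PowerSeries.mk (tot K true 0) = X * PowerSeries.mk (tot K false K) := by
      ext n
      cases n with
      | zero => simp [tot_zero]
      | succ n => simp [tot_succ_zero, coeff_succ_X_mul]
    rw [this]; ring
  | succ m ih =>
    have : PowerSeries.mk (tot K true (m+1))
        = X * PowerSeries.mk (tot K true m) + X * PowerSeries.mk (tot K false K) := by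
      ext n
      cases n with
      | zero => simp [tot_zero]
      | succ n => simp [tot_true_succ, coeff_succ_X_mul]
    rw [this]; linear_combination X * ih

open PowerSeries in
lemma tot_false_ps (m : ℕ) : PowerSeries.mk (tot (m+1) false (m+1))
    = X * (PowerSeries.mk (cnt (m+1) m) + PowerSeries.mk (tot (m+1) true m)
      + PowerSeries.mk (tot (m+1) false (m+1))) := by
  ext n
  cases n with
  | zero => simp [tot_zero]
  | succ n => simp [tot_false_succ, coeff_succ_X_mul]

lemma total_eq (K n : ℕ) : ∑ w ∈ kbonWords n (K+1), (wSper n (List.ofFn w) : ℤ)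
    = (n + 1) * cnt K K n + tot K false K n := by
  rw [kbonWords, Finset.sum_filter, cnt, tot, Finset.mul_sum, ← Finset.sum_add_distrib]
  refine Finset.sum_congr rfl fun w _ => ?_
  have := okW_iff' K (List.ofFn w)
  simp only [← this, wSper, wRuns_eq]
  split_ifs <;> simp

open PowerSeries in
lemma final_ps (m : ℕ) : PowerSeries.mk (fun n =>
          if n = 0 then 0 else ∑ w ∈ kbonWords n (m+2), (wSper n (List.ofFn w) : ℤ))
    = PowerSeries.mk (cnt (m+1) (m+1)) + X * derivative ℤ (PowerSeries.mk (cnt (m+1) (m+1)))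
      + PowerSeries.mk (tot (m+1) false (m+1)) - 1 := by
  ext n
  cases n with
  | zero => simp [cnt_zero, tot_zero]
  | succ n =>
    simp [total_eq (m+1), coeff_succ_X_mul, coeff_one, coeff_derivative]
    ring

theorem total_semiperimeter_gf (k : ℕ) (hk : 2 ≤ k) :
    (1 - 2 * PowerSeries.X + PowerSeries.X ^ (k + 1)) ^ 2
      * PowerSeries.mk (fun n =>
          if n = 0 then 0 else ∑ w ∈ kbonWords n k, (wSper n (List.ofFn w) : ℤ))
    = PowerSeries.C (R := ℤ) 5 * PowerSeries.X
        - PowerSeries.C (R := ℤ) 5 * PowerSeries.X ^ 2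
        - PowerSeries.C (R := ℤ) (2 + k) * PowerSeries.X ^ k
        - PowerSeries.C (R := ℤ) (1 - (k : ℤ)) * PowerSeries.X ^ (k + 1)
        + PowerSeries.C (R := ℤ) 4 * PowerSeries.X ^ (k + 2)
        - PowerSeries.X ^ (2 * k + 2) := by
  obtain ⟨m, rfl⟩ := Nat.exists_eq_add_of_le' hk
  rw [final_ps]
  have hC := cnt_ps (m+1) (m+1)
  have hCm := cnt_ps (m+1) m
  have hT := tot_ps (m+1) m
  have hU := tot_false_ps m
  generalize PowerSeries.mk (cnt (m+1) (m+1)) = C at *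
  generalize PowerSeries.mk (cnt (m+1) m) = Cm at *
  generalize PowerSeries.mk (tot (m+1) true m) = T at *
  generalize PowerSeries.mk (tot (m+1) false (m+1)) = U at *
  have hDC : (1 - 2 * PowerSeries.X + PowerSeries.X ^ (m + 3)) * C
      = 1 - PowerSeries.X ^ (m+2) := by linear_combination hC
  have hder := congrArg (PowerSeries.derivative ℤ) hDC
  have h2 : PowerSeries.derivative ℤ (2 : PowerSeries ℤ) = 0 := by
    exact_mod_cast (PowerSeries.derivative ℤ).map_natCast 2
  simp only [Derivation.leibniz, Derivation.leibniz_pow, map_add, map_sub, h2,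
    PowerSeries.derivative_X, Derivation.map_one_eq_zero, smul_eq_mul, nsmul_eq_mul] at hder
  generalize PowerSeries.derivative ℤ C = C' at *
  have a1 : m + 3 - 1 = m + 2 := by omega
  have a2 : m + 2 - 1 = m + 1 := by omega
  rw [a1, a2] at hder
  push_cast at hder
  have hDU : (1 - 2 * PowerSeries.X + PowerSeries.X ^ (m + 3)) * U
      = PowerSeries.X * (1 - PowerSeries.X ^ (m+1)) * (1 + PowerSeries.X * C) := by
    linear_combination (1 - PowerSeries.X) * hU + PowerSeries.X * hCm + PowerSeries.X * hT
  simp only [map_add, map_sub, map_natCast, map_ofNat, map_one]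
  push_cast
  have e : m + 2 + 1 = m + 3 := rfl
  rw [e]
  set D := (1 - 2 * PowerSeries.X + PowerSeries.X ^ (m + 3) : PowerSeries ℤ) with hD
  have goal1 : D ^ 2 * (C + PowerSeries.X * C' + U - 1) =
    D * (1 - PowerSeries.X ^ (m+2))
     + (PowerSeries.X * (-(((m : PowerSeries ℤ)+2) * PowerSeries.X ^ (m+1)) * D
        - (1 - PowerSeries.X ^ (m+2)) * (-2 + ((m : PowerSeries ℤ)+3) * PowerSeries.X ^ (m+2))))
     + PowerSeries.X * (1 - PowerSeries.X ^ (m+1)) *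
       (D + PowerSeries.X * (1 - PowerSeries.X ^ (m+2))) - D ^ 2 := by
    linear_combination (D - PowerSeries.X * (-2 + ((m : PowerSeries ℤ)+3) * PowerSeries.X ^ (m+2)) + PowerSeries.X^2 * (1 - PowerSeries.X ^ (m+1))) * hDC
       + PowerSeries.X * D * hder + D * hDU
  rw [goal1, hD]
  ring
end

section
/- Let t_n(p,q) = Σ_{w ∈ F_{n,2}} p^{sper(w)} q^{area(w)} ∈ ℤ[p,q]. Then for all n ≥ 3, t_n(p,q) = pq·t_{n−1}(p,q) + p³q³·t_{n−2}(p,q), with initial values t_1(p,q) = p²q + p³q² and t_2(p,q) = p³q² + 2p⁴q³. -/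
open Finset

/-- `t_n(p,q) = Σ_{w ∈ F_{n,2}} p^{sper(w)} q^{area(w)}`. -/
noncomputable def tpoly (n : ℕ) : Rpq :=
  ∑ w ∈ kbonWords n 2,
    pvar ^ (n + 1 + wRuns (List.ofFn w)) * qvar ^ (n + wOnes (List.ofFn w))

theorem zip_count_le (l m : List Bool) : (l.zip m).count (true, true) ≤ l.count true := by
  induction l generalizing m with
  | nil => simp
  | cons a l ih =>
    cases m with
    | nil => simp
    | cons b m =>
      have := ih m
      cases a <;> cases b <;> simp [List.count_cons] <;> omega

theorem zip_false (l : List Bool) :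
    ((false :: l).zip l).count (true, true) = (l.zip l.tail).count (true, true) := by
  cases l <;> simp [List.count_cons]

theorem wRuns_false (l : List Bool) : wRuns (false :: l) = wRuns l := by
  have := zip_false l
  simp only [wRuns, List.tail_cons, this]
  simp

theorem wRuns_true_false (l : List Bool) : wRuns (true :: false :: l) = wRuns l + 1 := by
  have h := zip_false l
  have h2 := zip_count_le l l.tail
  simp only [wRuns, List.tail_cons, List.zip_cons_cons, List.count_cons] at *
  simp at *
  omega

open Classical in
noncomputable def gw (l : List Bool) : Rpq :=
  if [true, true] <:+: l then 0 else
    pvar ^ (l.length + 1 + wRuns l) * qvar ^ (l.length + wOnes l)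

theorem gw_false (l : List Bool) : gw (false :: l) = pvar * qvar * gw l := by
  have h : [true, true] <:+: (false :: l) ↔ [true, true] <:+: l := by
    simp [List.infix_cons_iff]
  unfold gw
  by_cases h' : [true, true] <:+: l
  · simp [h, h']
  · simp only [h, h', if_false, wRuns_false, wOnes, List.length_cons]
    simp
    ring

theorem gw_true_false (l : List Bool) :
    gw (true :: false :: l) = pvar ^ 3 * qvar ^ 3 * gw l := by
  have h : [true, true] <:+: (true :: false :: l) ↔ [true, true] <:+: l := by
    simp [List.infix_cons_iff]
  unfold gw
  by_cases h' : [true, true] <:+: l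
  · simp [h, h']
  · simp only [h, h', if_false, wRuns_true_false, wOnes, List.length_cons]
    simp
    ring

theorem gw_true_true (l : List Bool) : gw (true :: true :: l) = 0 := by
  simp [gw, List.infix_cons_iff]

theorem tpoly_eq (n : ℕ) : tpoly n = ∑ w : Fin n → Bool, gw (List.ofFn w) := by
  classical
  unfold tpoly kbonWords gw
  rw [Finset.sum_filter]
  refine Finset.sum_congr rfl fun w _ => ?_
  simp only [List.length_ofFn, List.replicate]
  split_ifs <;> simp_all

theorem sum_words (n : ℕ) (F : List Bool → Rpq) :
    ∑ w : Fin (n + 1) → Bool, F (List.ofFn w) =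
      ∑ w : Fin n → Bool, F (true :: List.ofFn w) +
      ∑ w : Fin n → Bool, F (false :: List.ofFn w) := by
  rw [← (Fin.consEquiv (fun _ => Bool)).sum_comp, Fintype.sum_prod_type]
  simp [Fin.consEquiv, List.ofFn_succ]

theorem tpoly_rec (n : ℕ) :
    tpoly (n + 2) = pvar * qvar * tpoly (n + 1) + pvar ^ 3 * qvar ^ 3 * tpoly n := by
  simp only [tpoly_eq]
  rw [sum_words (n + 1) gw, sum_words n (fun l => gw (true :: l))]
  simp only [gw_true_true, gw_true_false, gw_false, Finset.mul_sum]
  simp [add_comm]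

theorem gw_nil : gw [] = pvar := by
  simp [gw, wRuns, wOnes]

theorem tpoly_zero : tpoly 0 = pvar := by
  simp [tpoly_eq, gw_nil]

theorem tpoly_one : tpoly 1 = pvar ^ 2 * qvar + pvar ^ 3 * qvar ^ 2 := by
  have h : gw [true] = pvar ^ 3 * qvar ^ 2 := by
    simp [gw, wRuns, wOnes, List.infix_cons_iff]
  rw [tpoly_eq, sum_words 0 gw]
  simp [gw_false, gw_nil, h]
  ring

theorem fibonacci_polyomino_recurrence :
    (∀ n : ℕ, 3 ≤ n → tpoly n = pvar * qvar * tpoly (n - 1) + pvar ^ 3 * qvar ^ 3 * tpoly (n - 2))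
    ∧ tpoly 1 = pvar ^ 2 * qvar + pvar ^ 3 * qvar ^ 2
    ∧ tpoly 2 = pvar ^ 3 * qvar ^ 2 + 2 * pvar ^ 4 * qvar ^ 3 := by
  refine ⟨fun n hn => ?_, tpoly_one, ?_⟩
  · obtain ⟨m, rfl⟩ : ∃ m, n = m + 2 := ⟨n - 2, by omega⟩
    exact tpoly_rec m
  · rw [tpoly_rec 0, tpoly_one, tpoly_zero]
    ring
end

section
/- For all n ≥ 1, the total area of all Fibonacci polyominoes with n columns satisfies Σ_{w ∈ F_{n,2}} (n + s(w)) = Σ_{i=0}^{⌊(n+1)/2⌋} C(n+1−i, i)·(n+i) = (1/5)·(6n·F_{n+2} + (n+2)·F_n), where F_m is the m-th Fibonacci number. -/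
open Finset

def fibT : ℕ → (ℕ → ℚ) → ℚ
  | 0, f => f 0
  | 1, f => f 0 + f 1
  | (n + 2), f => fibT (n + 1) f + fibT n (fun i => f (i + 1))

lemma fibT_lin (n : ℕ) : ∀ a b : ℚ, fibT n (fun i => a + b * (i : ℚ)) =
    a * (Nat.fib (n + 2) : ℚ)
      + b * (((n : ℚ) * (Nat.fib (n + 2) : ℚ) + ((n : ℚ) + 2) * (Nat.fib n : ℚ)) / 5) := by
  induction n using Nat.twoStepInduction with
  | zero => intro a b; simp [fibT]
  | one => intro a b; norm_num [fibT, Nat.fib_add_two]; ring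
  | more n ih1 ih2 =>
    intro a b
    have h : (fun i : ℕ => a + b * ((i + 1 : ℕ) : ℚ)) = fun i : ℕ => (a + b) + b * (i : ℚ) := by
      funext i; push_cast; ring
    rw [fibT, ih2, h, ih1]
    have e2 := Nat.fib_add_two (n := n)
    have e3 := Nat.fib_add_two (n := n + 1)
    have e4 := Nat.fib_add_two (n := n + 2)
    simp only [show n + 1 + 2 = n + 3 from rfl, show n + 1 + 1 = n + 2 from rfl,
      show n + 2 + 2 = n + 4 from rfl, show n + 2 + 1 = n + 3 from rfl] at *
    rw [e4, e3, e2]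
    push_cast
    ring

lemma choose_sum (n : ℕ) : ∀ f : ℕ → ℚ,
    ∑ i ∈ Finset.range (n + 2), (Nat.choose (n + 1 - i) i : ℚ) * f i = fibT n f := by
  induction n using Nat.twoStepInduction with
  | zero => intro f; simp [fibT, Finset.sum_range_succ]
  | one => intro f; simp [fibT, Finset.sum_range_succ, Nat.choose]
  | more n ih1 ih2 =>
    intro f
    rw [fibT, ← ih2, ← ih1, Finset.sum_range_succ', Finset.sum_range_succ,
      Finset.sum_range_succ' _ (n + 2)]
    have h : ∀ i ∈ Finset.range (n + 2),
        (Nat.choose (n + 2 + 1 - (i + 1)) (i + 1) : ℚ) * f (i + 1)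
        = (Nat.choose (n + 1 + 1 - (i + 1)) (i + 1) : ℚ) * f (i + 1)
          + (Nat.choose (n + 1 - i) i : ℚ) * f (i + 1) := by
      intro i hi
      rw [Finset.mem_range] at hi
      rw [show n + 2 + 1 - (i + 1) = (n + 1 - i) + 1 by omega,
        show n + 1 + 1 - (i + 1) = n + 1 - i by omega, Nat.choose_succ_succ]
      push_cast; ring
    rw [Finset.sum_congr rfl h, Finset.sum_add_distrib]
    simp
    ring

lemma choose_sum' (n : ℕ) (f : ℕ → ℚ) :
    ∑ i ∈ Finset.range ((n + 1) / 2 + 1), (Nat.choose (n + 1 - i) i : ℚ) * f i = fibT n f := by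
  rw [← choose_sum]
  apply Finset.sum_subset
  · intro i; simp only [Finset.mem_range]; omega
  · intro i _ hi
    rw [Finset.mem_range] at hi
    rw [Nat.choose_eq_zero_of_lt (by omega)]; simp

lemma infix_false (l : List Bool) :
    [true, true] <:+: (false :: l) ↔ [true, true] <:+: l := by
  rw [List.infix_cons_iff]; simp

lemma infix_tt (l : List Bool) : [true, true] <:+: (true :: true :: l) := by
  rw [List.infix_cons_iff]; simp

lemma infix_tf (l : List Bool) :
    [true, true] <:+: (true :: false :: l) ↔ [true, true] <:+: l := by
  rw [List.infix_cons_iff, infix_false]; simp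

lemma sum_cons (n : ℕ) (g : List Bool → ℚ) :
    ∑ w : Fin (n + 1) → Bool, g (List.ofFn w)
      = ∑ w : Fin n → Bool, g (true :: List.ofFn w)
        + ∑ w : Fin n → Bool, g (false :: List.ofFn w) := by
  rw [← (Fin.consEquiv (fun _ : Fin (n + 1) => Bool)).sum_comp, Fintype.sum_prod_type,
    Fintype.sum_bool]
  simp [Fin.consEquiv, List.ofFn_succ]

def wt (f : ℕ → ℚ) (l : List Bool) : ℚ :=
  if ¬ ([true, true] <:+: l) then f (wOnes l) else 0

lemma word_sum (n : ℕ) : ∀ f : ℕ → ℚ,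
    ∑ w : Fin n → Bool, wt f (List.ofFn w) = fibT n f := by
  induction n using Nat.twoStepInduction with
  | zero => intro f; simp [wt, fibT, wOnes]
  | one =>
    intro f
    rw [sum_cons]
    simp [wt, fibT, wOnes, List.infix_cons_iff, add_comm]
  | more n ih1 ih2 =>
    intro f
    rw [fibT, ← ih2, ← ih1, sum_cons, sum_cons n (fun l => wt f (true :: l))]
    have h1 : ∀ l, wt f (true :: true :: l) = 0 := by intro l; simp [wt, infix_tt]
    have h2 : ∀ l, wt f (true :: false :: l) = wt (fun i => f (i + 1)) l := by
      intro l; simp [wt, infix_tf, wOnes]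
    have h3 : ∀ l, wt f (false :: l) = wt f l := by
      intro l; simp [wt, infix_false, wOnes]
    simp only [h1, h2, h3]
    simp [add_comm]

theorem total_area_fibonacci (n : ℕ) (hn : 1 ≤ n) :
    (∑ w ∈ kbonWords n 2, ((n : ℚ) + (wOnes (List.ofFn w) : ℚ)))
        = ∑ i ∈ Finset.range ((n + 1) / 2 + 1),
            (Nat.choose (n + 1 - i) i : ℚ) * ((n : ℚ) + (i : ℚ))
    ∧ (∑ w ∈ kbonWords n 2, ((n : ℚ) + (wOnes (List.ofFn w) : ℚ)))
        = (6 * (n : ℚ) * (Nat.fib (n + 2) : ℚ) + ((n : ℚ) + 2) * (Nat.fib n : ℚ)) / 5 := by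
  have h : (∑ w ∈ kbonWords n 2, ((n : ℚ) + (wOnes (List.ofFn w) : ℚ)))
      = fibT n (fun i => (n : ℚ) + (i : ℚ)) := by
    rw [← word_sum, kbonWords, Finset.sum_filter]
    rfl
  rw [h]
  refine ⟨(choose_sum' n (fun i => (n : ℚ) + (i : ℚ))).symm, ?_⟩
  have := fibT_lin n n 1
  simp only [one_mul] at this
  rw [this]; ring
end

section
/- For every integer k ≥ 2, the following identity of formal power series in x with coefficients in ℤ[p,q] holds: (1 − (p³q² + p⁵q³)·x + (p⁸q⁵ − p⁹q⁶)·x² + p^{5k+4} q^{3k+3}·x^{k+1}) · Σ_{n≥1} ( Σ_{w ∈ F_{n,k}} p^{edg(w)} q^{ver(w)} ) xⁿ = p²q³·( (p²q + p⁵q³)·x − (p⁷q⁴ − p⁸q⁵)·x² − p^{5k} q^{3k}·x^{k} − p^{5k+3} q^{3k+2}·x^{k+1} ). -/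
open Finset

/-- Number of vertices of the `k`-bonacci graph of a word `w` of length `n`:
`ver(w) = 2n + 2 + s(w) + b(w)`. -/
def wVer (n : ℕ) (w : List Bool) : ℕ := 2 * n + 2 + wOnes w + wRuns w

/-- Number of edges of the `k`-bonacci graph of a word `w` of length `n`:
`edg(w) = 3n + 1 + 2s(w) + b(w)`. -/
def wEdg (n : ℕ) (w : List Bool) : ℕ := 3 * n + 1 + 2 * wOnes w + wRuns w

namespace KBon

noncomputable def g (a b c : Rpq) (k : ℕ) : ℕ → List Bool → Rpq
  | _, [] => 1
  | _, false :: l => a * g a b c k 0 l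
  | j, true :: l => if j + 1 < k then b * (if j = 0 then c else 1) * g a b c k (j + 1) l else 0

lemma zc_le (l : List Bool) : (l.zip l.tail).count (true, true) ≤ l.count true := by
  induction l with
  | nil => simp
  | cons x l ih =>
    cases l with
    | nil => simp
    | cons y l =>
      simp only [List.tail_cons, List.zip_cons_cons, List.count_cons] at ih ⊢
      cases x <;> cases y <;> simp at ih ⊢ <;> omega

lemma zc_le' (l : List Bool) :
    ((true :: l).zip l).count (true, true) ≤ l.count true := by
  cases l with
  | nil => simp
  | cons y l =>
    have := zc_le (y :: l)
    cases y
    · simp only [List.tail_cons, List.zip_cons_cons, List.count_cons] at this ⊢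
      simpa using this
    · clear this
      induction l with
      | nil => simp
      | cons x l ih =>
        have := zc_le (x :: l)
        cases x
        · simp [List.count_cons] at this ⊢; omega
        · simp [List.count_cons] at ih ⊢; omega

lemma runs_nil : wRuns [] = 0 := by simp [wRuns]
lemma runs_one : wRuns [true] = 1 := by simp [wRuns]
lemma runs_false (l : List Bool) : wRuns (false :: l) = wRuns l := by
  cases l <;> simp [wRuns, List.count_cons]
lemma runs_tf (l : List Bool) : wRuns (true :: false :: l) = 1 + wRuns l := by
  have h1 := runs_false l
  have := zc_le (false :: l)
  simp [wRuns, List.count_cons] at h1 this ⊢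
  omega
lemma runs_tt (l : List Bool) : wRuns (true :: true :: l) = wRuns (true :: l) := by
  have := zc_le' l
  simp [wRuns, List.count_cons] at this ⊢

lemma runs_rep (j : ℕ) : wRuns (List.replicate j true) = if j = 0 then 0 else 1 := by
  induction j with
  | zero => simp [runs_nil]
  | succ j ih =>
    cases j with
    | zero => simp [runs_one]
    | succ j => simp [List.replicate_succ, runs_tt] at ih ⊢; exact ih

lemma runs_rep_false (j : ℕ) (l : List Bool) :
    wRuns (List.replicate j true ++ false :: l) = (if j = 0 then 0 else 1) + wRuns l := by
  induction j with
  | zero => simp [runs_false]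
  | succ j ih =>
    cases j with
    | zero => simp [runs_tf]
    | succ j => simp [List.replicate_succ, runs_tt] at ih ⊢; exact ih

lemma pre_false (j k : ℕ) (h : j < k) (l : List Bool) :
    ¬ (List.replicate k true <+: List.replicate j true ++ false :: l) := by
  induction j generalizing k with
  | zero =>
    obtain ⟨m, rfl⟩ : ∃ m, k = m + 1 := ⟨k - 1, by omega⟩
    simp [List.replicate_succ, List.cons_prefix_cons]
  | succ j ih =>
    obtain ⟨m, rfl⟩ : ∃ m, k = m + 1 := ⟨k - 1, by omega⟩
    simp only [List.replicate_succ, List.cons_append, List.cons_prefix_cons, true_and]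
    exact ih m (by omega)

lemma inf_false (j k : ℕ) (h : j < k) (l : List Bool) :
    (List.replicate k true <:+: List.replicate j true ++ false :: l)
      ↔ List.replicate k true <:+: l := by
  induction j with
  | zero =>
    have := pre_false 0 k h l
    simp only [List.replicate_zero, List.nil_append] at this ⊢
    rw [List.infix_cons_iff]; tauto
  | succ j ih =>
    have := pre_false (j+1) k h l
    have := ih (by omega)
    simp only [List.replicate_succ, List.cons_append] at *
    rw [List.infix_cons_iff]; tauto

noncomputable def h (k : ℕ) (l : List Bool) : Rpq := by
  classical exact
  if List.replicate k true <:+: l then 0 else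
    pvar ^ (3 * l.length + 2 * wOnes l + wRuns l) * qvar ^ (2 * l.length + wOnes l + wRuns l)

lemma h_eq (k j : ℕ) (hj : j < k) (l : List Bool) :
    h k (List.replicate j true ++ l) =
      (if j = 0 then 1 else (pvar * qvar) * (pvar ^ 5 * qvar ^ 3) ^ j) *
        g (pvar ^ 3 * qvar ^ 2) (pvar ^ 5 * qvar ^ 3) (pvar * qvar) k j l := by
  induction l generalizing j with
  | nil =>
    have : ¬ (List.replicate k true <:+: List.replicate j true) := fun hh => by
      have := hh.length_le
      simp at this; omega
    simp only [List.append_nil, h, this, if_false, g, runs_rep, wOnes, List.count_replicate_self,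
      List.length_replicate]
    split_ifs with h0
    · subst h0; simp
    · ring
  | cons x l ih =>
    cases x
    · have h0 := ih 0 (by omega)
      simp only [List.replicate_zero, List.nil_append, if_true, one_mul] at h0
      simp only [g, ← h0, h, inf_false j k hj l, runs_rep_false]
      by_cases h1 : List.replicate k true <:+: l
      · simp [h1]
      by_cases h2 : j = 0
      · subst h2
        simp [wOnes, h1]
        ring
      · simp [h1, h2, wOnes, List.count_cons, List.count_append]
        ring
    · have e : List.replicate j true ++ true :: l = List.replicate (j+1) true ++ l := by
        rw [List.replicate_succ']; simp
      rw [e, g]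
      by_cases hk : j + 1 < k
      · rw [ih _ hk, if_pos hk]
        by_cases h0 : j = 0
        · subst h0; simp only [zero_add, if_true, one_ne_zero, if_false]; ring
        · simp [h0]; ring
      · have : k = j + 1 := by omega
        subst this
        have : List.replicate (j+1) true <:+: List.replicate (j+1) true ++ l :=
          (List.prefix_append _ _).isInfix
        simp [h, this]

noncomputable def T (a b c : Rpq) (k j : ℕ) : PowerSeries Rpq :=
  PowerSeries.mk fun n => ∑ w : Fin n → Bool, g a b c k j (List.ofFn w)

lemma T_rec (a b c : Rpq) (k j : ℕ) :
    T a b c k j = 1 + PowerSeries.C a * PowerSeries.X * T a b c k 0 +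
      (if j + 1 < k then PowerSeries.C (b * (if j = 0 then c else 1)) * PowerSeries.X
        * T a b c k (j + 1) else 0) := by
  ext1 n
  cases n with
  | zero =>
    split_ifs <;> simp [T, g, mul_assoc, PowerSeries.coeff_zero_eq_constantCoeff]
  | succ n =>
    have e : PowerSeries.coeff (n+1) (T a b c k j) =
        ∑ w : Fin n → Bool, g a b c k j (true :: List.ofFn w) +
        ∑ w : Fin n → Bool, g a b c k j (false :: List.ofFn w) := by
      simp only [T, PowerSeries.coeff_mk]
      rw [← (Fin.consEquiv (fun _ : Fin (n+1) => Bool)).sum_comp, Fintype.sum_prod_type,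
        Fintype.sum_bool]
      simp [Fin.consEquiv, List.ofFn_succ]
    rw [e]
    split_ifs with h1 h2
    · subst h2
      rw [zero_add] at h1
      simp [mul_assoc, PowerSeries.coeff_succ_X_mul, PowerSeries.coeff_C_mul, PowerSeries.coeff_one, g, T, h1, Finset.mul_sum, add_comm]
    all_goals
      simp [mul_assoc, PowerSeries.coeff_succ_X_mul, PowerSeries.coeff_C_mul, PowerSeries.coeff_one, g, T, *, Finset.mul_sum, add_comm]

lemma T_sum (a b c : Rpq) (k : ℕ) (i j : ℕ) (hj : 1 ≤ j) (h : j + i + 1 = k) :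
    (1 - PowerSeries.C b * PowerSeries.X) * T a b c k j =
      (1 + PowerSeries.C a * PowerSeries.X * T a b c k 0) *
        (1 - (PowerSeries.C b * PowerSeries.X) ^ (i + 1)) := by
  induction i generalizing j with
  | zero =>
    rw [T_rec, if_neg (by omega)]; ring
  | succ i ih =>
    have := ih (j+1) (by omega) (by omega)
    rw [T_rec, if_pos (by omega), if_neg (by omega), mul_one]
    linear_combination (PowerSeries.C b * PowerSeries.X) * this

lemma T_zero (a b c : Rpq) (k : ℕ) (hk : 2 ≤ k) :
    (1 - PowerSeries.C b * PowerSeries.X) * T a b c k 0 =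
      (1 + PowerSeries.C a * PowerSeries.X * T a b c k 0) *
        (1 - PowerSeries.C b * PowerSeries.X + PowerSeries.C c * (PowerSeries.C b * PowerSeries.X)
          - PowerSeries.C c * (PowerSeries.C b * PowerSeries.X) ^ k) := by
  obtain ⟨i, rfl⟩ : ∃ i, k = i + 2 := ⟨k - 2, by omega⟩
  have h1 := T_sum a b c (i+2) i 1 le_rfl (by omega)
  have h2 := T_rec a b c (i+2) 0
  rw [if_pos (by omega), if_pos rfl, map_mul, zero_add] at h2
  linear_combination (1 - PowerSeries.C b * PowerSeries.X) * h2 + (PowerSeries.C b * PowerSeries.C c * PowerSeries.X) * h1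

lemma gf_eq (k : ℕ) (hk : 2 ≤ k) :
    PowerSeries.mk (fun n =>
          if n = 0 then 0 else
            ∑ w ∈ kbonWords n k,
              pvar ^ wEdg n (List.ofFn w) * qvar ^ wVer n (List.ofFn w))
    = PowerSeries.C (R := Rpq) (pvar * qvar ^ 2) *
      (T (pvar ^ 3 * qvar ^ 2) (pvar ^ 5 * qvar ^ 3) (pvar * qvar) k 0 - 1) := by
  ext1 n
  rw [PowerSeries.coeff_mk, PowerSeries.coeff_C_mul, map_sub, PowerSeries.coeff_one]
  split_ifs with h0
  · subst h0
    simp [T, g]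
  · rw [sub_zero, T, PowerSeries.coeff_mk, kbonWords, Finset.sum_filter, Finset.mul_sum]
    refine Finset.sum_congr rfl fun w _ => ?_
    have := h_eq k 0 (by omega) (List.ofFn w)
    simp only [List.replicate_zero, List.nil_append, if_true, one_mul] at this
    rw [← this, h]
    by_cases hh : List.replicate k true <:+: List.ofFn w
    · simp [hh]
    · simp only [hh, not_false_eq_true, if_true, if_false, wEdg, wVer, List.length_ofFn]
      ring

end KBon

theorem kbonacci_graph_gf (k : ℕ) (hk : 2 ≤ k) :
    (1 - PowerSeries.C (R := Rpq) (pvar ^ 3 * qvar ^ 2 + pvar ^ 5 * qvar ^ 3) * PowerSeries.X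
        + PowerSeries.C (R := Rpq) (pvar ^ 8 * qvar ^ 5 - pvar ^ 9 * qvar ^ 6) * PowerSeries.X ^ 2
        + PowerSeries.C (R := Rpq) (pvar ^ (5 * k + 4) * qvar ^ (3 * k + 3)) * PowerSeries.X ^ (k + 1))
      * PowerSeries.mk (fun n =>
          if n = 0 then 0 else
            ∑ w ∈ kbonWords n k,
              pvar ^ wEdg n (List.ofFn w) * qvar ^ wVer n (List.ofFn w))
    = PowerSeries.C (R := Rpq) (pvar ^ 2 * qvar ^ 3)
        * (PowerSeries.C (R := Rpq) (pvar ^ 2 * qvar + pvar ^ 5 * qvar ^ 3) * PowerSeries.X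
          - PowerSeries.C (R := Rpq) (pvar ^ 7 * qvar ^ 4 - pvar ^ 8 * qvar ^ 5) * PowerSeries.X ^ 2
          - PowerSeries.C (R := Rpq) (pvar ^ (5 * k) * qvar ^ (3 * k)) * PowerSeries.X ^ k
          - PowerSeries.C (R := Rpq) (pvar ^ (5 * k + 3) * qvar ^ (3 * k + 2)) * PowerSeries.X ^ (k + 1)) := by
  rw [KBon.gf_eq k hk]
  have := KBon.T_zero (pvar ^ 3 * qvar ^ 2) (pvar ^ 5 * qvar ^ 3) (pvar * qvar) k hk
  generalize KBon.T (pvar ^ 3 * qvar ^ 2) (pvar ^ 5 * qvar ^ 3) (pvar * qvar) k 0 = t at this ⊢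
  simp only [map_mul, map_pow, map_add, map_sub] at this ⊢
  linear_combination (PowerSeries.C pvar * PowerSeries.C qvar ^ 2) * this
end

section
/- For every integer k ≥ 2, the following identity of formal power series in x over ℤ holds: (1 − 2x + x^{k+1})² · Σ_{n≥1} ( Σ_{w ∈ F_{n,k}} edg(w) ) xⁿ = 11x − 5x² − (2 + 5k)·x^{k} − (9 − 5k)·x^{k+1} + 4x^{k+2} + 2x^{2k+1} − x^{2k+2}. In other words, the generating function for the total number of edges of all k-bonacci graphs on words of length n is E_k(x) = (11x − 5x² − (2+5k)x^k − (9−5k)x^{k+1} + 4x^{k+2} + 2x^{2k+1} − x^{2k+2})/(1 − 2x + x^{k+1})². -/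
open Finset

namespace KB

lemma pairs_le (w : List Bool) : (w.zip w.tail).count (true, true) ≤ w.count true := by
  induction w with
  | nil => simp
  | cons a w ih =>
    cases w with
    | nil => simp
    | cons b w =>
      cases a <;> cases b <;> simp_all [List.count_cons] <;> omega

lemma runs_false (w : List Bool) : wRuns (false :: w) = wRuns w := by
  cases w <;> simp [wRuns, List.count_cons]

lemma runs_tt (w : List Bool) : wRuns (true :: true :: w) = wRuns (true :: w) := by
  simp [wRuns, List.count_cons]

lemma runs_tf (w : List Bool) : wRuns (true :: false :: w) = wRuns w + 1 := by
  have h := pairs_le (false :: w)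
  rw [← runs_false w]
  simp [wRuns] at *
  omega

lemma runs_rep (j : ℕ) (w : List Bool) :
    wRuns (List.replicate j true ++ false :: w) = wRuns w + (if j = 0 then 0 else 1) := by
  induction j with
  | zero => simp [runs_false]
  | succ j ih =>
    cases j with
    | zero => simp [runs_tf]
    | succ j =>
      simp only [List.replicate_succ, List.cons_append, runs_tt] at *
      simpa using ih

lemma runs_rep_nil (j : ℕ) :
    wRuns (List.replicate j true) = (if j = 0 then 0 else 1) := by
  induction j with
  | zero => simp [wRuns]
  | succ j ih =>
    cases j with
    | zero => simp [wRuns]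
    | succ j =>
      simp only [List.replicate_succ, runs_tt] at *
      simpa using ih

lemma not_prefix (k j : ℕ) (h : j < k) (w : List Bool) :
    ¬ (List.replicate k true <+: List.replicate j true ++ false :: w) := by
  induction j generalizing k with
  | zero =>
    obtain ⟨k, rfl⟩ : ∃ m, k = m + 1 := ⟨k - 1, by omega⟩
    simp [List.replicate_succ, List.cons_prefix_cons]
  | succ j ih =>
    obtain ⟨k, rfl⟩ : ∃ m, k = m + 1 := ⟨k - 1, by omega⟩
    simp only [List.replicate_succ, List.cons_append, List.cons_prefix_cons, true_and]
    exact ih k (by omega)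

lemma infix_iff (k j : ℕ) (h : j < k) (w : List Bool) :
    (List.replicate k true <:+: List.replicate j true ++ false :: w) ↔
      List.replicate k true <:+: w := by
  induction j with
  | zero =>
    have := not_prefix k 0 h w
    simp only [List.replicate_zero, List.nil_append] at *
    rw [List.infix_cons_iff]; tauto
  | succ j ih =>
    have := not_prefix k (j+1) h w
    rw [List.replicate_succ, List.cons_append] at *
    rw [List.infix_cons_iff, ih (by omega)]; tauto

def f (w : List Bool) : ℤ := 3 * w.length + 2 * wOnes w + wRuns w

open Classical in
noncomputable def h (k : ℕ) (a b : ℤ) (w : List Bool) : ℤ :=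
  if List.replicate k true <:+: w then 0 else a * f w + b

noncomputable def S (k : ℕ) (a b : ℤ) (j n : ℕ) : ℤ :=
  ∑ w : Fin n → Bool, h k a b (List.replicate j true ++ List.ofFn w)

def e (j : ℕ) : ℤ := if j = 0 then 0 else 1

lemma f_rep (j : ℕ) (w : List Bool) :
    f (List.replicate j true ++ false :: w) = f w + (5 * j + 3 + e j) := by
  unfold f e wOnes
  rw [runs_rep]
  simp [List.count_cons, List.count_append, List.count_replicate]
  split_ifs <;> ring

lemma f_rep_nil (j : ℕ) : f (List.replicate j true) = 5 * j + e j := by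
  unfold f e wOnes
  rw [runs_rep_nil]
  simp
  ring

lemma h_false (k j : ℕ) (hj : j < k) (a b : ℤ) (w : List Bool) :
    h k a b (List.replicate j true ++ false :: w)
      = h k a b w + a * (5 * j + 3 + e j) * h k 0 1 w := by
  unfold h
  simp only [infix_iff k j hj, f_rep]
  split_ifs <;> ring

lemma sum_succ (n : ℕ) (g : List Bool → ℤ) :
    ∑ w : Fin (n+1) → Bool, g (List.ofFn w) =
      ∑ w : Fin n → Bool, g (false :: List.ofFn w) + ∑ w : Fin n → Bool, g (true :: List.ofFn w) := by
  rw [← (Fin.consEquiv (fun _ : Fin (n+1) => Bool)).sum_comp, Fintype.sum_prod_type]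
  simp [Fin.consEquiv, List.ofFn_succ, add_comm]

lemma S_succ (k j n : ℕ) (hj : j < k) (a b : ℤ) :
    S k a b j (n+1) = S k a b 0 n + a * (5 * j + 3 + e j) * S k 0 1 0 n + S k a b (j+1) n := by
  unfold S
  rw [sum_succ n (fun l => h k a b (List.replicate j true ++ l))]
  simp only [h_false k j hj, Finset.sum_add_distrib, ← Finset.mul_sum]
  simp [List.replicate_succ']

lemma S_zero (k j : ℕ) (hj : j < k) (a b : ℤ) :
    S k a b j 0 = a * (5 * j + e j) + b := by
  have : ¬ (List.replicate k true <:+: List.replicate j true) := by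
    intro hh
    have := hh.length_le
    simp at this; omega
  simp [S, h, this, f_rep_nil]

lemma S_top (k n : ℕ) (a b : ℤ) : S k a b k n = 0 := by
  unfold S
  apply Finset.sum_eq_zero
  intro w _
  have : List.replicate k true <:+: List.replicate k true ++ List.ofFn w :=
    (List.prefix_append _ _).isInfix
  simp [h, this]

open PowerSeries

noncomputable def G (k : ℕ) (a b : ℤ) (j : ℕ) : PowerSeries ℤ := PowerSeries.mk (S k a b j)

lemma G_rec (k j : ℕ) (hj : j < k) (a b : ℤ) :
    G k a b j = C (a * (5 * j + e j) + b) +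
      X * (G k a b 0 + C (a * (5 * j + 3 + e j)) * G k 0 1 0 + G k a b (j+1)) := by
  ext n
  cases n with
  | zero =>
    rw [map_add, PowerSeries.coeff_zero_X_mul, PowerSeries.coeff_C, G, PowerSeries.coeff_mk,
      S_zero k j hj]
    simp
  | succ n =>
    rw [map_add, PowerSeries.coeff_succ_X_mul, PowerSeries.coeff_C, map_add, map_add,
      PowerSeries.coeff_C_mul]
    simp only [G, PowerSeries.coeff_mk]
    rw [S_succ k j n hj]
    simp

lemma G_unroll (k m : ℕ) (hm : m ≤ k) (a b : ℤ) :
    G k a b 0 = ∑ j ∈ Finset.range m, X ^ j * (C (a * (5 * j + e j) + b) +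
      X * (G k a b 0 + C (a * (5 * j + 3 + e j)) * G k 0 1 0)) + X ^ m * G k a b m := by
  induction m with
  | zero => simp
  | succ m ih =>
    rw [Finset.sum_range_succ]
    conv_lhs => rw [ih (by omega), G_rec k m (by omega)]
    ring

lemma G_top (k : ℕ) (a b : ℤ) : G k a b k = 0 := by
  ext n; simp [G, S_top]

noncomputable def Q (k : ℕ) : PowerSeries ℤ := ∑ j ∈ Finset.range k, X ^ j
noncomputable def U (k : ℕ) : PowerSeries ℤ := ∑ j ∈ Finset.range k, C (j : ℤ) * X ^ j

lemma Q_eq (k : ℕ) : (1 - X) * Q k = 1 - X ^ k := by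
  unfold Q; exact mul_neg_geom_sum X k

lemma U_eq (k : ℕ) : (1 - X)^2 * U k = X - C (k : ℤ) * X ^ k + (C (k : ℤ) - 1) * X ^ (k+1) := by
  induction k with
  | zero => simp [U]
  | succ k ih =>
    unfold U at *
    rw [Finset.sum_range_succ, mul_add, ih]
    push_cast
    simp only [map_add, map_one]
    ring

lemma e_sum (k : ℕ) (hk : 1 ≤ k) :
    ∑ j ∈ Finset.range k, C (e j) * X ^ j = Q k - 1 := by
  obtain ⟨k, rfl⟩ : ∃ m, k = m + 1 := ⟨k - 1, by omega⟩
  unfold Q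
  rw [Finset.sum_range_succ', Finset.sum_range_succ']
  simp [e]

lemma G_closed (k : ℕ) (hk : 1 ≤ k) (a b : ℤ) :
    G k a b 0 = C a * (5 * U k + (Q k - 1)) + C b * Q k + X * Q k * G k a b 0 +
      X * C a * (5 * U k + 3 * Q k + (Q k - 1)) * G k 0 1 0 := by
  have h1 := G_unroll k k le_rfl a b
  rw [G_top, mul_zero, add_zero] at h1
  rw [← e_sum k hk]
  conv_lhs => rw [h1]
  simp only [Q, U, Finset.mul_sum, Finset.sum_mul, ← Finset.sum_add_distrib]
  apply Finset.sum_congr rfl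
  intro j _
  have h5 : (C (5:ℤ) : PowerSeries ℤ) = 5 := by simp
  have h3 : (C (3:ℤ) : PowerSeries ℤ) = 3 := by simp
  simp only [map_add, map_mul, h5, h3]
  ring

lemma mk_eq (k : ℕ) (hk : 2 ≤ k) :
    PowerSeries.mk (fun n =>
          if n = 0 then 0 else ∑ w ∈ kbonWords n k, (wEdg n (List.ofFn w) : ℤ))
    = G k 1 1 0 - 1 := by
  ext n
  cases n with
  | zero => simp [G, S_zero k 0 (by omega), e]
  | succ n =>
    simp only [G, PowerSeries.coeff_mk, map_sub, PowerSeries.coeff_one, S, kbonWords,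
      Finset.sum_filter]
    simp only [Nat.succ_ne_zero, if_false, sub_zero]
    apply Finset.sum_congr rfl
    intro w _
    simp only [h, f, wEdg, List.replicate_zero, List.nil_append, List.length_ofFn]
    split_ifs
    · rfl
    · push_cast; ring

end KB

theorem total_edges_gf (k : ℕ) (hk : 2 ≤ k) :
    (1 - 2 * PowerSeries.X + PowerSeries.X ^ (k + 1)) ^ 2
      * PowerSeries.mk (fun n =>
          if n = 0 then 0 else ∑ w ∈ kbonWords n k, (wEdg n (List.ofFn w) : ℤ))
    = PowerSeries.C (R := ℤ) 11 * PowerSeries.X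
        - PowerSeries.C (R := ℤ) 5 * PowerSeries.X ^ 2
        - PowerSeries.C (R := ℤ) (2 + 5 * (k : ℤ)) * PowerSeries.X ^ k
        - PowerSeries.C (R := ℤ) (9 - 5 * (k : ℤ)) * PowerSeries.X ^ (k + 1)
        + PowerSeries.C (R := ℤ) 4 * PowerSeries.X ^ (k + 2)
        + PowerSeries.C (R := ℤ) 2 * PowerSeries.X ^ (2 * k + 1)
        - PowerSeries.X ^ (2 * k + 2) := by
  rw [KB.mk_eq k hk]
  have hA := KB.G_closed k (by omega) 0 1
  have hT := KB.G_closed k (by omega) 1 1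
  have hQ := KB.Q_eq k
  have hU := KB.U_eq k
  have hx : (1 - PowerSeries.X : PowerSeries ℤ) ≠ 0 := by
    intro hh
    have := congrArg (PowerSeries.coeff 0) hh
    simp at this
  have c11 : (PowerSeries.C (11:ℤ) : PowerSeries ℤ) = 11 := by simp
  have c5 : (PowerSeries.C (5:ℤ) : PowerSeries ℤ) = 5 := by simp
  have c2 : (PowerSeries.C (2:ℤ) : PowerSeries ℤ) = 2 := by simp
  have c4 : (PowerSeries.C (4:ℤ) : PowerSeries ℤ) = 4 := by simp
  have c9 : (PowerSeries.C (9:ℤ) : PowerSeries ℤ) = 9 := by simp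
  simp only [map_add, map_sub, map_mul, c11, c5, c2, c4, c9]
  have e1 : (PowerSeries.X : PowerSeries ℤ) ^ (k+1) = PowerSeries.X ^ k * PowerSeries.X := by ring
  have e2 : (PowerSeries.X : PowerSeries ℤ) ^ (k+2) = PowerSeries.X ^ k * PowerSeries.X^2 := by ring
  have e3 : (PowerSeries.X : PowerSeries ℤ) ^ (2*k+1) = (PowerSeries.X ^ k)^2 * PowerSeries.X := by
    ring
  have e4 : (PowerSeries.X : PowerSeries ℤ) ^ (2*k+2) = (PowerSeries.X ^ k)^2 * PowerSeries.X^2 := by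
    ring
  rw [e1] at hU
  rw [e1, e2, e3, e4]
  simp only [map_zero, map_one, zero_mul, mul_zero, zero_add, add_zero, one_mul, mul_one] at hA hT
  generalize (PowerSeries.X : PowerSeries ℤ) ^ k = y at *
  generalize (PowerSeries.X : PowerSeries ℤ) = x at *
  generalize KB.G k 0 1 0 = A at *
  generalize KB.G k 1 1 0 = T at *
  generalize KB.Q k = q at *
  generalize KB.U k = u at *
  generalize (PowerSeries.C (k:ℤ) : PowerSeries ℤ) = c at *
  have hA' : (1 - 2 * x + y * x) * A = 1 - y := by
    linear_combination (1 - x) * hA + (1 + x * A) * hQ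
  have hT' : (1 - x) * ((1 - 2 * x + y * x) * T) =
      5 * (x - c * y + (c - 1) * (y * x)) + 2 * (1 - y) * (1 - x) - (1 - x)^2
      + x * (5 * (x - c * y + (c - 1) * (y * x)) + 4 * (1 - y) * (1 - x) - (1 - x)^2) * A := by
    linear_combination (1 - x)^2 * hT + (5 + 5 * x * A) * hU +
      (1 - x) * (2 + x * T + 4 * x * A) * hQ
  apply mul_left_cancel₀ hx
  linear_combination (1 - 2 * x + y * x) * hT' +
    x * (5 * (x - c * y + (c - 1) * (y * x)) + 4 * (1 - y) * (1 - x) - (1 - x)^2) * hA'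
end

section
/- Let v_n(p,q) = Σ_{w ∈ F_{n,2}} p^{edg(w)} q^{ver(w)} ∈ ℤ[p,q]. Then for all n ≥ 3, v_n(p,q) = p³q²·v_{n−1}(p,q) + p⁹q⁶·v_{n−2}(p,q), with initial values v_1(p,q) = p⁴q⁴ + p⁷q⁶ and v_2(p,q) = p⁷q⁶ + 2p^{10}q⁸; moreover, for all n ≥ 1, v_n(p,q) = Σ_{i=0}^{⌊(n+1)/2⌋} C(n+1−i, i) · p^{3n+1+3i} q^{2n+2+2i}. -/
open Finset

/-- `v_n(p,q) = Σ_{w ∈ F_{n,2}} p^{edg(w)} q^{ver(w)}`, where for a Fibonacci word the graph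
has `ver(w) = 2n + 2 + 2s(w)` vertices and `edg(w) = 3n + 1 + 3s(w)` edges. -/
noncomputable def vpoly (n : ℕ) : Rpq :=
  ∑ w ∈ kbonWords n 2,
    pvar ^ (3 * n + 1 + 3 * wOnes (List.ofFn w)) * qvar ^ (2 * n + 2 + 2 * wOnes (List.ofFn w))

noncomputable def fwt (x : Rpq) (l : List Bool) : Rpq :=
  if [true, true] <:+: l then 0 else x ^ l.count true

noncomputable def fS (x : Rpq) (n : ℕ) : Rpq := ∑ w : Fin n → Bool, fwt x (List.ofFn w)

lemma sum_ofFn_succ (f : List Bool → Rpq) (n : ℕ) :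
    ∑ w : Fin (n + 1) → Bool, f (List.ofFn w)
      = ∑ w : Fin n → Bool, f (true :: List.ofFn w) + ∑ w : Fin n → Bool, f (false :: List.ofFn w) := by
  rw [← (Fin.consEquiv (fun _ : Fin (n + 1) => Bool)).sum_comp, Fintype.sum_prod_type]
  simp [Fin.consEquiv, List.ofFn_succ]

lemma fwt_false (x : Rpq) (l : List Bool) : fwt x (false :: l) = fwt x l := by
  simp [fwt, List.infix_cons_iff]

lemma fwt_tt (x : Rpq) (l : List Bool) : fwt x (true :: true :: l) = 0 := by
  simp [fwt, List.infix_cons_iff]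

lemma fwt_tf (x : Rpq) (l : List Bool) : fwt x (true :: false :: l) = x * fwt x l := by
  simp [fwt, List.infix_cons_iff, pow_succ']

lemma fS_rec (x : Rpq) (n : ℕ) : fS x (n + 2) = fS x (n + 1) + x * fS x n := by
  unfold fS
  rw [sum_ofFn_succ, sum_ofFn_succ (fun l => fwt x (true :: l))]
  simp only [fwt_false, fwt_tt, fwt_tf, Finset.sum_const_zero, zero_add, ← Finset.mul_sum]
  ring

lemma fS_zero (x : Rpq) : fS x 0 = 1 := by simp [fS, fwt]

lemma fS_one (x : Rpq) : fS x 1 = 1 + x := by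
  unfold fS
  rw [sum_ofFn_succ]
  simp [fwt, List.infix_cons_iff, add_comm]

lemma vpoly_eq (n : ℕ) :
    vpoly n = pvar ^ (3 * n + 1) * qvar ^ (2 * n + 2) * fS (pvar ^ 3 * qvar ^ 2) n := by
  unfold vpoly fS kbonWords fwt wOnes
  rw [Finset.sum_filter, Finset.mul_sum]
  refine Finset.sum_congr rfl fun w _ => ?_
  have h2 : List.replicate 2 true = [true, true] := rfl
  rw [h2]
  by_cases hw : [true, true] <:+: List.ofFn w
  · simp only [hw, not_true_eq_false, if_true, if_false, mul_zero]
  · simp only [hw, not_false_eq_true, if_true, if_false]; ring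

noncomputable def fG (x : Rpq) (m : ℕ) : Rpq :=
  ∑ ij ∈ Finset.HasAntidiagonal.antidiagonal m, (Nat.choose ij.1 ij.2 : Rpq) * x ^ ij.2

lemma fG_rec (x : Rpq) (m : ℕ) : fG x (m + 2) = fG x (m + 1) + x * fG x m := by
  unfold fG
  rw [Finset.Nat.sum_antidiagonal_succ', Finset.Nat.sum_antidiagonal_succ,
    Finset.Nat.sum_antidiagonal_succ' (n := m), Finset.mul_sum]
  simp only [Nat.choose_succ_succ', Nat.cast_add, add_mul, Finset.sum_add_distrib]
  simp only [Nat.choose_zero_succ, Nat.choose_zero_right, Nat.cast_zero, zero_mul, pow_succ]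
  have : ∀ i : ℕ × ℕ, (Nat.choose i.1 i.2 : Rpq) * (x ^ i.2 * x)
    = x * ((Nat.choose i.1 i.2 : Rpq) * x ^ i.2) := fun i => by ring
  simp only [this]
  ring

lemma fS_eq_fG (x : Rpq) (n : ℕ) : fS x n = fG x (n + 1) ∧ fS x (n + 1) = fG x (n + 2) := by
  induction n with
  | zero =>
    rw [fS_zero, fS_one, fG_rec]
    simp [fG, Finset.Nat.antidiagonal_succ]
  | succ n ih =>
    exact ⟨ih.2, by rw [fS_rec, fG_rec, ih.1, ih.2]⟩

lemma fG_range (x : Rpq) (m : ℕ) :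
    fG x m = ∑ i ∈ Finset.range (m / 2 + 1), (Nat.choose (m - i) i : Rpq) * x ^ i := by
  unfold fG
  rw [← Finset.Nat.sum_antidiagonal_swap, Finset.Nat.sum_antidiagonal_eq_sum_range_succ_mk]
  symm
  apply Finset.sum_subset
  · intro i; simp only [Finset.mem_range]; omega
  · intro i _ h
    simp only [Finset.mem_range] at h
    simp [Nat.choose_eq_zero_of_lt (show m - i < i by omega)]

theorem fibonacci_graph_recurrence_and_closed_form :
    (∀ n : ℕ, 3 ≤ n →
      vpoly n = pvar ^ 3 * qvar ^ 2 * vpoly (n - 1) + pvar ^ 9 * qvar ^ 6 * vpoly (n - 2))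
    ∧ vpoly 1 = pvar ^ 4 * qvar ^ 4 + pvar ^ 7 * qvar ^ 6
    ∧ vpoly 2 = pvar ^ 7 * qvar ^ 6 + 2 * pvar ^ 10 * qvar ^ 8
    ∧ ∀ n : ℕ, 1 ≤ n →
        vpoly n = ∑ i ∈ Finset.range ((n + 1) / 2 + 1),
          (Nat.choose (n + 1 - i) i : Rpq)
            * pvar ^ (3 * n + 1 + 3 * i) * qvar ^ (2 * n + 2 + 2 * i) := by
  refine ⟨?_, ?_, ?_, ?_⟩
  · intro n hn
    obtain ⟨k, rfl⟩ : ∃ k, n = k + 2 := ⟨n - 2, by omega⟩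
    rw [show k + 2 - 1 = k + 1 by omega, show k + 2 - 2 = k by omega,
      vpoly_eq, vpoly_eq, vpoly_eq, fS_rec]
    ring
  · rw [vpoly_eq, fS_one]; ring
  · rw [vpoly_eq, fS_rec, fS_one, fS_zero]; ring
  · intro n _
    rw [vpoly_eq, (fS_eq_fG _ n).1, fG_range, Finset.mul_sum]
    refine Finset.sum_congr rfl fun i _ => ?_
    ring
end
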